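/- For the recursively defined elements Q^{(n)} ∈ TL^B_n (Q^{(0)} = 1, Q^{(n+1)} = Q^{(n)} + ([n]_s/[n+1]_s)·Q^{(n)} e_n Q^{(n)}), one has (Q^{(n)} e_n Q^{(n)})² = −([n+1]_s/[n]_s) · Q^{(n)} e_n Q^{(n)} in TL^B_{n+1}, for all n ≥ 1. -/

import Mathlib

noncomputable section
open scoped Classical

/-! ### The field `ℂ(q,s)` and two-variable quantum integers -/

/-- The field `ℂ(q,s)` of rational functions in two variables. -/
abbrev 𝕃 : Type := FractionRing (MvPolynomial (Fin 2) ℂ)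

/-- The variable `q`. -/
def qB : 𝕃 := algebraMap (MvPolynomial (Fin 2) ℂ) 𝕃 (MvPolynomial.X 0)

/-- The variable `s`. -/
def sB : 𝕃 := algebraMap (MvPolynomial (Fin 2) ℂ) 𝕃 (MvPolynomial.X 1)

/-- The two-variable quantum integer `[n]_s`: `[0]_s = 1` and
`[n]_s = q^(n-1) s + q^(-(n-1)) s⁻¹` for `n ≥ 1`. -/
def bqInt (n : ℤ) : 𝕃 := if n = 0 then 1 else qB ^ (n - 1) * sB + qB ^ (1 - n) * sB⁻¹

/-! ### The Temperley–Lieb algebra of type B and its Jones–Wenzl projections -/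

/-- Defining relations of the Temperley–Lieb algebra `TL^B_n` of type B.
The generator indexed by `i : Fin n` represents `e_i` (labels `0, …, n-1`):
the type A relations among `e_1, …, e_{n-1}`, together with `e_0² = -[1]_s e_0`,
`e_1 e_0 e_1 = (q s⁻¹ + q⁻¹ s) e_1`, and `e_0 e_i = e_i e_0` for `i ≥ 2`. -/
inductive TLBrel (n : ℕ) : FreeAlgebra 𝕃 (Fin n) → FreeAlgebra 𝕃 (Fin n) → Prop
  | sqA (i : Fin n) (h : 1 ≤ (i : ℕ)) :
      TLBrel n (FreeAlgebra.ι 𝕃 i * FreeAlgebra.ι 𝕃 i) ((-(qB + qB⁻¹)) • FreeAlgebra.ι 𝕃 i)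
  | sq0 (i : Fin n) (h : (i : ℕ) = 0) :
      TLBrel n (FreeAlgebra.ι 𝕃 i * FreeAlgebra.ι 𝕃 i) ((-(bqInt 1)) • FreeAlgebra.ι 𝕃 i)
  | braidA (i j : Fin n) (hi : 1 ≤ (i : ℕ)) (hj : 1 ≤ (j : ℕ))
      (h : (j : ℕ) = i + 1 ∨ (i : ℕ) = j + 1) :
      TLBrel n (FreeAlgebra.ι 𝕃 i * FreeAlgebra.ι 𝕃 j * FreeAlgebra.ι 𝕃 i) (FreeAlgebra.ι 𝕃 i)
  | braid0 (i j : Fin n) (hi : (i : ℕ) = 1) (hj : (j : ℕ) = 0) :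
      TLBrel n (FreeAlgebra.ι 𝕃 i * FreeAlgebra.ι 𝕃 j * FreeAlgebra.ι 𝕃 i)
        ((qB * sB⁻¹ + qB⁻¹ * sB) • FreeAlgebra.ι 𝕃 i)
  | comm (i j : Fin n) (h : (i : ℕ) + 1 < j ∨ (j : ℕ) + 1 < i) :
      TLBrel n (FreeAlgebra.ι 𝕃 i * FreeAlgebra.ι 𝕃 j) (FreeAlgebra.ι 𝕃 j * FreeAlgebra.ι 𝕃 i)

/-- The Temperley–Lieb algebra `TL^B_n` of type B, with generators `e_0, …, e_{n-1}`. -/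
abbrev TLB (n : ℕ) : Type := RingQuot (TLBrel n)

/-- The generator `e_i` of `TL^B_n` (0-based labels). -/
def EB {n : ℕ} (i : Fin n) : TLB n := RingQuot.mkAlgHom 𝕃 (TLBrel n) (FreeAlgebra.ι 𝕃 i)

set_option synthInstance.maxHeartbeats 1000000 in
/-- The natural inclusion `TL^B_n → TL^B_{n+1}`, sending `e_i` to `e_i`. -/
def TLBincl (n : ℕ) : TLB n →ₐ[𝕃] TLB (n + 1) :=
  RingQuot.liftAlgHom 𝕃
    ⟨FreeAlgebra.lift 𝕃 (fun i => EB i.castSucc), by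
      intro x y h
      induction h with
      | sqA i h =>
          have h2 := RingQuot.mkAlgHom_rel 𝕃 (TLBrel.sqA i.castSucc (by simpa using h))
          simp only [map_mul, map_smul, FreeAlgebra.lift_ι_apply, EB] at h2 ⊢
          exact h2
      | sq0 i h =>
          have h2 := RingQuot.mkAlgHom_rel 𝕃 (TLBrel.sq0 i.castSucc (by simpa using h))
          simp only [map_mul, map_smul, FreeAlgebra.lift_ι_apply, EB] at h2 ⊢
          exact h2
      | braidA i j hi hj h =>
          have h2 := RingQuot.mkAlgHom_rel 𝕃
            (TLBrel.braidA i.castSucc j.castSucc (by simpa using hi) (by simpa using hj)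
              (by simpa using h))
          simp only [map_mul, FreeAlgebra.lift_ι_apply, EB] at h2 ⊢
          exact h2
      | braid0 i j hi hj =>
          have h2 := RingQuot.mkAlgHom_rel 𝕃
            (TLBrel.braid0 i.castSucc j.castSucc (by simpa using hi) (by simpa using hj))
          simp only [map_mul, map_smul, FreeAlgebra.lift_ι_apply, EB] at h2 ⊢
          exact h2
      | comm i j h =>
          have h2 := RingQuot.mkAlgHom_rel 𝕃
            (TLBrel.comm i.castSucc j.castSucc (by simpa using h))
          simp only [map_mul, FreeAlgebra.lift_ι_apply, EB] at h2 ⊢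
          exact h2⟩

/-- The iterated natural inclusion `TL^B_n → TL^B_{n+k}`. -/
def TLBinclIter (n : ℕ) : (k : ℕ) → TLB n →ₐ[𝕃] TLB (n + k)
  | 0 => AlgHom.id 𝕃 (TLB n)
  | k + 1 => (TLBincl (n + k)).comp (TLBinclIter n k)

/-- The type B Jones–Wenzl projection `Q^{(n)} ∈ TL^B_n`, via the recurrence
`Q^{(0)} = 1`, `Q^{(n+1)} = Q^{(n)} + ([n]_s/[n+1]_s) Q^{(n)} e_n Q^{(n)}`. -/
def JWB : (n : ℕ) → TLB n
  | 0 => 1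
  | n + 1 =>
      TLBincl n (JWB n) +
        (bqInt n / bqInt (n + 1)) •
          (TLBincl n (JWB n) * EB (Fin.last n) * TLBincl n (JWB n))

theorem qB_ne : qB ≠ 0 := by
  unfold qB
  exact (map_ne_zero_iff _ (IsFractionRing.injective (MvPolynomial (Fin 2) ℂ) 𝕃)).2
    (MvPolynomial.X_ne_zero 0)

theorem sB_ne : sB ≠ 0 := by
  unfold sB
  exact (map_ne_zero_iff _ (IsFractionRing.injective (MvPolynomial (Fin 2) ℂ) 𝕃)).2
    (MvPolynomial.X_ne_zero 1)

theorem qs_ne (m : ℕ) : qB ^ (2 * m) * sB ^ 2 + 1 ≠ 0 := by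
  have h : qB ^ (2 * m) * sB ^ 2 + 1 = algebraMap (MvPolynomial (Fin 2) ℂ) 𝕃
      (MvPolynomial.X 0 ^ (2 * m) * MvPolynomial.X 1 ^ 2 + 1) := by
    simp only [qB, sB, map_add, map_mul, map_pow, map_one]
  rw [h]
  refine (map_ne_zero_iff _ (IsFractionRing.injective (MvPolynomial (Fin 2) ℂ) 𝕃)).2 ?_
  intro h0
  have := congrArg (MvPolynomial.eval (fun _ => (1 : ℂ))) h0
  norm_num at this

theorem bqInt_succ (m : ℕ) : bqInt ((m : ℤ) + 1) = qB ^ m * sB + (qB ^ m)⁻¹ * sB⁻¹ := by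
  have h : (m : ℤ) + 1 ≠ 0 := by omega
  have h1 : (m : ℤ) + 1 - 1 = m := by ring
  have h2 : (1 : ℤ) - (m + 1) = -m := by ring
  rw [bqInt, if_neg h, h1, h2, zpow_neg, zpow_natCast]

theorem bqInt_succ_ne (m : ℕ) : bqInt ((m : ℤ) + 1) ≠ 0 := by
  rw [bqInt_succ]
  intro h
  apply qs_ne m
  have hq := pow_ne_zero m qB_ne
  have hs := sB_ne
  have : qB ^ (2 * m) * sB ^ 2 + 1
      = (qB ^ m * sB) * (qB ^ m * sB + (qB ^ m)⁻¹ * sB⁻¹) := by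
    field_simp
    ring
  rw [this, h, mul_zero]

theorem bqInt_zero : bqInt 0 = 1 := by simp [bqInt]

theorem coef1 : -(qB + qB⁻¹) + bqInt ((0 : ℕ) : ℤ) / bqInt (((0 : ℕ) : ℤ) + 1)
      * (qB * sB⁻¹ + qB⁻¹ * sB)
    = -(bqInt (((0 + 1 : ℕ) : ℤ) + 1) / bqInt ((0 + 1 : ℕ) : ℤ)) := by
  have h1 := bqInt_succ_ne 0
  have e1 : bqInt ((0 + 1 : ℕ) : ℤ) = bqInt (((0 : ℕ) : ℤ) + 1) := by norm_num
  have e0 : bqInt ((0 : ℕ) : ℤ) = 1 := bqInt_zero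
  have e2 := bqInt_succ (0 + 1)
  rw [e1, e0]
  have key : bqInt (((0 + 1 : ℕ) : ℤ) + 1)
      = (qB + qB⁻¹) * bqInt (((0 : ℕ) : ℤ) + 1) - (qB * sB⁻¹ + qB⁻¹ * sB) := by
    rw [e2, bqInt_succ 0]
    simp only [zero_add, pow_one, pow_zero, inv_one]
    ring
  rw [key]
  field_simp
  ring

theorem coef2 (m : ℕ) : -(qB + qB⁻¹) + bqInt ((m + 1 : ℕ) : ℤ) / bqInt (((m + 1 : ℕ) : ℤ) + 1) * 1
    = -(bqInt (((m + 1 + 1 : ℕ) : ℤ) + 1) / bqInt ((m + 1 + 1 : ℕ) : ℤ)) := by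
  have h1 := bqInt_succ_ne (m + 1)
  have e1 : bqInt ((m + 1 + 1 : ℕ) : ℤ) = bqInt (((m + 1 : ℕ) : ℤ) + 1) := by push_cast; rfl
  have e0 : bqInt ((m + 1 : ℕ) : ℤ) = bqInt ((m : ℤ) + 1) := by push_cast; rfl
  have key : bqInt (((m + 1 + 1 : ℕ) : ℤ) + 1)
      = (qB + qB⁻¹) * bqInt (((m + 1 : ℕ) : ℤ) + 1) - bqInt ((m : ℤ) + 1) := by
    rw [bqInt_succ, bqInt_succ, bqInt_succ]
    have hq := qB_ne
    have hs := sB_ne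
    field_simp
    ring
  rw [e1, e0, key]
  field_simp
  ring

section abstract_lemmas

theorem absTL_sq {K A : Type*} [Field K] [Ring A] [Algebra K A] (P e f Q : A) (a b c : K)
    (hP : P * P = P) (hc : f * P = P * f) (hf : f * f = a • f) (hfe : f * e * f = b • f)
    (hQ : Q = P + c • (P * e * P)) (hQQ : Q * Q = Q) :
    (Q * f * Q) * (Q * f * Q) = (a + c * b) • (Q * f * Q) := by
  have hQP : Q * P = Q := by
    rw [hQ, add_mul, hP, smul_mul_assoc, mul_assoc (P * e), hP]
  have h1 : f * (P * e * P) * f = b • (P * f) := by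
    calc f * (P * e * P) * f = (f * P) * e * (P * f) := by simp only [mul_assoc]
      _ = (P * f) * e * (f * P) := by rw [hc]
      _ = P * (f * e * f) * P := by simp only [mul_assoc]
      _ = b • (P * (f * P)) := by
        rw [hfe, mul_smul_comm, smul_mul_assoc, mul_assoc]
      _ = b • (P * f) := by rw [hc, ← mul_assoc, hP]
  have h2 : f * Q * f = (a + c * b) • (P * f) := by
    rw [hQ, mul_add, add_mul, mul_smul_comm, smul_mul_assoc, h1, hc, mul_assoc, hf,
      mul_smul_comm, smul_smul, ← add_smul]
  calc (Q * f * Q) * (Q * f * Q) = Q * f * (Q * Q) * f * Q := by simp only [mul_assoc]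
    _ = Q * (f * Q * f) * Q := by rw [hQQ]; simp only [mul_assoc]
    _ = (a + c * b) • (Q * P * f * Q) := by
      rw [h2, mul_smul_comm, smul_mul_assoc, ← mul_assoc]
    _ = _ := by rw [hQP]

theorem absTL_idem {K A : Type*} [Field K] [Ring A] [Algebra K A] (P e : A) (c d : K)
    (hP : P * P = P) (hX : (P * e * P) * (P * e * P) = d • (P * e * P)) (hcd : c * d = -1) :
    (P + c • (P * e * P)) * (P + c • (P * e * P)) = P + c • (P * e * P) := by
  have h1 : P * (P * e * P) = P * e * P := by rw [← mul_assoc, ← mul_assoc, hP]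
  have h2 : (P * e * P) * P = P * e * P := by rw [mul_assoc, hP]
  generalize P * e * P = X at *
  rw [add_mul, mul_add, mul_add, hP, mul_smul_comm, h1, smul_mul_assoc, smul_mul_assoc, h2,
    mul_smul_comm, hX, smul_smul c d, hcd]
  simp

end abstract_lemmas

set_option synthInstance.maxHeartbeats 1000000

theorem TLBincl_EB {n : ℕ} (i : Fin n) : TLBincl n (EB i) = EB i.castSucc := by
  unfold TLBincl
  refine (RingQuot.liftAlgHom_mkAlgHom_apply _ _ _ _).trans ?_
  exact FreeAlgebra.lift_ι_apply _ _

theorem EB_sqA {n : ℕ} (i : Fin n) (h : 1 ≤ (i : ℕ)) :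
    EB i * EB i = (-(qB + qB⁻¹)) • EB i := by
  have h2 := RingQuot.mkAlgHom_rel 𝕃 (TLBrel.sqA i h)
  simp only [map_mul, map_smul] at h2
  exact h2

theorem EB_sq0 {n : ℕ} (i : Fin n) (h : (i : ℕ) = 0) :
    EB i * EB i = (-(bqInt 1)) • EB i := by
  have h2 := RingQuot.mkAlgHom_rel 𝕃 (TLBrel.sq0 i h)
  simp only [map_mul, map_smul] at h2
  exact h2

theorem EB_braidA {n : ℕ} (i j : Fin n) (hi : 1 ≤ (i : ℕ)) (hj : 1 ≤ (j : ℕ))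
    (h : (j : ℕ) = i + 1 ∨ (i : ℕ) = j + 1) : EB i * EB j * EB i = EB i := by
  have h2 := RingQuot.mkAlgHom_rel 𝕃 (TLBrel.braidA i j hi hj h)
  simp only [map_mul] at h2
  exact h2

theorem EB_braid0 {n : ℕ} (i j : Fin n) (hi : (i : ℕ) = 1) (hj : (j : ℕ) = 0) :
    EB i * EB j * EB i = (qB * sB⁻¹ + qB⁻¹ * sB) • EB i := by
  have h2 := RingQuot.mkAlgHom_rel 𝕃 (TLBrel.braid0 i j hi hj)
  simp only [map_mul, map_smul] at h2
  exact h2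

theorem EB_comm {n : ℕ} (i j : Fin n) (h : (i : ℕ) + 1 < j ∨ (j : ℕ) + 1 < i) :
    EB i * EB j = EB j * EB i := by
  have h2 := RingQuot.mkAlgHom_rel 𝕃 (TLBrel.comm i j h)
  simp only [map_mul] at h2
  exact h2

theorem EB_last_comm (n : ℕ) (x : TLB n) :
    EB (Fin.last (n + 1)) * TLBincl (n + 1) (TLBincl n x)
      = TLBincl (n + 1) (TLBincl n x) * EB (Fin.last (n + 1)) := by
  obtain ⟨y, rfl⟩ := RingQuot.mkAlgHom_surjective 𝕃 (TLBrel n) x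
  induction y using FreeAlgebra.induction with
  | grade0 r =>
    simp only [AlgHom.commutes]
    exact (Algebra.commutes r _).symm
  | grade1 i =>
    change EB (Fin.last (n + 1)) * TLBincl (n + 1) (TLBincl n (EB i))
      = TLBincl (n + 1) (TLBincl n (EB i)) * EB (Fin.last (n + 1))
    rw [TLBincl_EB, TLBincl_EB]
    apply EB_comm
    right
    simp
  | mul a b ha hb =>
    simp only [map_mul]
    rw [← mul_assoc, ha, mul_assoc, hb, mul_assoc]
  | add a b ha hb =>
    simp only [map_add]
    rw [mul_add, add_mul, ha, hb]

theorem step_sq (n : ℕ) (hP : JWB n * JWB n = JWB n)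
    (hQ : JWB (n + 1) * JWB (n + 1) = JWB (n + 1)) :
    (TLBincl (n + 1) (JWB (n + 1)) * EB (Fin.last (n + 1)) * TLBincl (n + 1) (JWB (n + 1))) *
        (TLBincl (n + 1) (JWB (n + 1)) * EB (Fin.last (n + 1)) * TLBincl (n + 1) (JWB (n + 1))) =
      (-(bqInt (((n + 1 : ℕ) : ℤ) + 1) / bqInt ((n + 1 : ℕ) : ℤ))) •
        (TLBincl (n + 1) (JWB (n + 1)) * EB (Fin.last (n + 1)) *
          TLBincl (n + 1) (JWB (n + 1))) := by
  have hrec : TLBincl (n + 1) (JWB (n + 1)) = TLBincl (n + 1) (TLBincl n (JWB n)) +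
      (bqInt n / bqInt (n + 1)) • (TLBincl (n + 1) (TLBincl n (JWB n)) *
        EB (Fin.last n).castSucc * TLBincl (n + 1) (TLBincl n (JWB n))) := by
    rw [← TLBincl_EB, ← map_mul, ← map_mul, ← map_smul, ← map_add]
    rfl
  have hP' : TLBincl (n + 1) (TLBincl n (JWB n)) * TLBincl (n + 1) (TLBincl n (JWB n))
      = TLBincl (n + 1) (TLBincl n (JWB n)) := by
    rw [← map_mul, ← map_mul, hP]
  have hQ' : TLBincl (n + 1) (JWB (n + 1)) * TLBincl (n + 1) (JWB (n + 1))
      = TLBincl (n + 1) (JWB (n + 1)) := by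
    rw [← map_mul, hQ]
  have hf := EB_sqA (Fin.last (n + 1)) (by simp)
  have hc := EB_last_comm n (JWB n)
  cases n with
  | zero =>
    rw [← coef1]
    exact absTL_sq (K := 𝕃) (A := TLB (0 + 1 + 1)) _ _ _ _ _ _ _ hP' hc hf (EB_braid0 _ _ (by simp) (by simp)) hrec hQ'
  | succ m =>
    rw [← coef2]
    refine absTL_sq (K := 𝕃) (A := TLB (m + 1 + 1 + 1)) _ _ _ _ _ _ _ hP' hc hf ?_ hrec hQ'
    rw [one_smul]
    exact EB_braidA _ _ (by simp) (by simp) (by simp)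

theorem JWB_idem : ∀ n : ℕ, JWB n * JWB n = JWB n ∧ JWB (n + 1) * JWB (n + 1) = JWB (n + 1)
  | 0 => by
    have h0 : JWB 0 * JWB 0 = JWB 0 := by
      change (1 : TLB 0) * 1 = 1
      exact mul_one _
    refine ⟨h0, ?_⟩
    have h1 : TLBincl 0 (JWB 0) = 1 := map_one _
    refine absTL_idem (K := 𝕃) (A := TLB (0 + 1)) (TLBincl 0 (JWB 0)) (EB (Fin.last 0)) _ (-(bqInt 1)) ?_ ?_ ?_
    · rw [← map_mul, h0]
    · rw [h1, one_mul, mul_one]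
      exact EB_sq0 _ (by simp)
    · have := bqInt_succ_ne 0
      have e0 : bqInt ((0 : ℕ) : ℤ) = 1 := bqInt_zero
      have e1 : bqInt (((0 : ℕ) : ℤ) + 1) = bqInt 1 := by norm_num
      rw [e1] at this
      rw [e0, e1]
      field_simp
  | n + 1 => by
    obtain ⟨h1, h2⟩ := JWB_idem n
    refine ⟨h2, ?_⟩
    refine absTL_idem (K := 𝕃) (A := TLB (n + 1 + 1)) (TLBincl (n + 1) (JWB (n + 1))) (EB (Fin.last (n + 1))) _ _ ?_
      (step_sq n h1 h2) ?_
    · rw [← map_mul, h2]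
    · have a1 := bqInt_succ_ne n
      have a2 := bqInt_succ_ne (n + 1)
      have e : bqInt ((n + 1 : ℕ) : ℤ) = bqInt ((n : ℤ) + 1) := by push_cast; rfl
      rw [← e] at a1
      field_simp

/-- For `n ≥ 1`,
`(Q^{(n)} e_n Q^{(n)})² = -([n+1]_s/[n]_s) Q^{(n)} e_n Q^{(n)}` in `TL^B_{n+1}`. -/
theorem JWB_e_JWB_sq (n : ℕ) (hn : 1 ≤ n) :
    (TLBincl n (JWB n) * EB (Fin.last n) * TLBincl n (JWB n)) *
        (TLBincl n (JWB n) * EB (Fin.last n) * TLBincl n (JWB n)) =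
      (-(bqInt (n + 1) / bqInt n)) •
        (TLBincl n (JWB n) * EB (Fin.last n) * TLBincl n (JWB n)) := by
  obtain ⟨m, rfl⟩ : ∃ m, n = m + 1 := ⟨n - 1, by omega⟩
  exact step_sq m (JWB_idem m).1 (JWB_idem m).2
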